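/- There is an absolute constant c > 0 such that for every finite set A ⊆ ℂ with 0 ∉ A and |A| ≥ 2, one has |A − A| + |A·A| ≥ c·|A|^{50/39}/(log |A|)^{5/13}. -/

import Mathlib

/-!
Write `n = |A|`, `D = A - A`, `Q = |A * A|`, and let `r(d)` be the number of representations of `d`
as a difference of two elements of `A`.

*Incidences.* Only incidences with Cartesian products are needed, and there the
Szemerédi–Trotter bound over `ℂ` has an elementary proof (`rich_lines_le`). On a `k`-rich line join
each point to its nearest neighbour on the line. Discs of nearest-neighbour radius have bounded
overlap, so for most points both projections of the segment are short, in the sense that the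
corresponding disc contains only a proportion `O(1 / k)` of the factor. There are
`O(|A|² / k)` and `O(|B|² / k)` such short pairs, and the projections determine the line.

*Two consequences of a small product set.* Lines `y = c * (x + b)` with `c ∈ A`, `b ∈ D` against
points of `X × (A * A)` give `E² = O(Q² |D|³)` for the energy `E` of `A` and `D` (`energy_sq_le`).
Counting multiplicative quadruples among the sums `a + d ∈ A` with `d` popular, and bounding for
each ratio `l` the solutions of `a + d = l * (a' + d')` by incidences with lines of slope `l`, gives
`#{d : r(d) ≥ j} * j⁴ = O(Q n³ log n)` (`popular_diff_le`).

*Third moment.* For `T = ∑ r(d)³`, Cauchy–Schwarz on the map `(a, b, c) ↦ (a - b, a - c)`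
restricted to popular `a - b` gives `τ (n ∑_{x ∈ P} r(x))² ≤ T E` whenever `r ≥ τ` on `P`
(`triple_count`). Choosing `P` to carry half of the mass gives `n⁸ ≤ 8 |D| T E`, and choosing `P` to
be a level set gives `#{r ≥ j}² j³ ≤ T E / n²`. The latter and the fourth-power bound together give
`T⁴ n² = O(E (Q n³ log n)³)` (`third_moment_le`). Eliminating `T` and `E` yields
`n⁵⁰ = O(|D|²³ Q¹⁶ (log n)⁶)`, which is stronger than the claim since `log n ≥ 1 / 2`.
-/

open scoped Pointwise Classical

/-! ### Rich lines in complex Cartesian products -/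


/-- Two vectors in a common closed octant of the plane make an angle of at most `π / 4`, so
subtracting the shorter one from the longer one shortens it. -/
lemma norm_sub_lt_of_octant {u v : ℂ} (hv : v ≠ 0) (hle : ‖v‖ ≤ ‖u‖)
    (h1 : 0 ≤ u.re * v.re) (h2 : 0 ≤ u.im * v.im)
    (h3 : 0 ≤ (u.re ^ 2 - u.im ^ 2) * (v.re ^ 2 - v.im ^ 2)) : ‖u - v‖ < ‖u‖ := by
  have hvn : 0 < ‖v‖ := norm_pos_iff.mpr hv
  have eu : ‖u‖ ^ 2 = u.re ^ 2 + u.im ^ 2 := by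
    rw [← Complex.normSq_eq_norm_sq, Complex.normSq_apply]; ring
  have ev : ‖v‖ ^ 2 = v.re ^ 2 + v.im ^ 2 := by
    rw [← Complex.normSq_eq_norm_sq, Complex.normSq_apply]; ring
  have euv : ‖u - v‖ ^ 2 = (u.re - v.re) ^ 2 + (u.im - v.im) ^ 2 := by
    rw [← Complex.normSq_eq_norm_sq, Complex.normSq_apply]; simp; ring
  have hsq : ‖v‖ ^ 2 ≤ ‖u‖ ^ 2 := by gcongr
  have hvpos : 0 < ‖v‖ ^ 2 := by positivity
  set p := u.re * v.re + u.im * v.im with hp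
  have hp0 : 0 ≤ p := by positivity
  have key : ‖u‖ ^ 2 * ‖v‖ ^ 2 ≤ 2 * p ^ 2 := by
    rw [eu, ev, hp]; nlinarith [mul_nonneg h1 h2]
  have hlt : ‖v‖ ^ 2 < 2 * p := by
    by_contra hcon
    push Not at hcon
    have h4 : (2 * p) ^ 2 ≤ (‖v‖ ^ 2) ^ 2 := by gcongr
    nlinarith [mul_le_mul_of_nonneg_right hsq hvpos.le, mul_pos hvpos hvpos]
  have : ‖u - v‖ ^ 2 < ‖u‖ ^ 2 := by
    rw [euv, eu]; rw [ev] at hlt; nlinarith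
  exact lt_of_pow_lt_pow_left₀ 2 (norm_nonneg _) this

/-- If each disc about `g a` of radius `ρ a` has no other centre in its interior, then at most nine
of the discs contain `z`: one per octant around `z`, and one centred at `z`. -/
lemma overlap_le_nine {ι : Type*} (S : Finset ι) (g : ι → ℂ) (ρ : ι → ℝ)
    (hpos : ∀ a ∈ S, 0 < ρ a) (hsep : ∀ a ∈ S, ∀ b ∈ S, a ≠ b → ρ a ≤ ‖g a - g b‖) (z : ℂ) :
    (S.filter fun a => ‖z - g a‖ ≤ ρ a).card ≤ 9 := by
  let key : ι → Option (Bool × Bool × Bool) := fun a =>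
    if g a = z then none else
      some (decide (0 ≤ (z - g a).re), decide (0 ≤ (z - g a).im),
        decide (0 ≤ (z - g a).re ^ 2 - (z - g a).im ^ 2))
  have hinj : Set.InjOn key (S.filter fun a => ‖z - g a‖ ≤ ρ a) := by
    -- it suffices to refute two distinct indices with equal keys, the first one farther from `z`
    have main : ∀ a ∈ S, ∀ b ∈ S, ‖z - g a‖ ≤ ρ a → a ≠ b → key a = key b →
        ‖z - g b‖ ≤ ‖z - g a‖ → False := by
      intro a ha b hb hza hab hk hle
      have hs := hsep a ha b hb hab
      by_cases hb0 : g b = z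
      · have ha0 : g a = z := by
          by_contra h
          simp [key, hb0, h] at hk
        rw [ha0, hb0, sub_self, norm_zero] at hs
        exact absurd (hpos a ha) (not_lt.mpr hs)
      · have ha0 : g a ≠ z := by
          intro h
          simp [key, hb0, h] at hk
        simp only [key, ha0, hb0, if_false, Option.some.injEq, Prod.mk.injEq,
          decide_eq_decide] at hk
        obtain ⟨k1, k2, k3⟩ := hk
        have sgn : ∀ x y : ℝ, (0 ≤ x ↔ 0 ≤ y) → 0 ≤ x * y := by
          intro x y h
          by_cases hx : 0 ≤ x
          · exact mul_nonneg hx (h.mp hx)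
          · have hy : ¬ 0 ≤ y := fun hy => hx (h.mpr hy)
            push Not at hx hy
            exact (mul_pos_of_neg_of_neg hx hy).le
        have := norm_sub_lt_of_octant (u := z - g a) (v := z - g b)
          (sub_ne_zero.mpr (Ne.symm hb0)) hle (sgn _ _ k1) (sgn _ _ k2) (sgn _ _ k3)
        rw [show z - g a - (z - g b) = -(g a - g b) by ring, norm_neg] at this
        linarith
    intro a ha b hb hk
    simp only [Finset.coe_filter, Set.mem_ofPred_eq] at ha hb
    by_contra hab
    rcases le_total ‖z - g b‖ ‖z - g a‖ with h | h
    · exact main a ha.1 b hb.1 ha.2 hab hk h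
    · exact main b hb.1 a ha.1 hb.2 (Ne.symm hab) hk.symm h
  have := Finset.card_le_card_of_injOn (t := Finset.univ) key (fun _ _ => Finset.mem_univ _) hinj
  simpa using this

/-- Pairs of distinct points `(a, a')` of `A` such that the closed disc about `a` through `a'`
contains at most a proportion `36 / k` of `A`. -/
noncomputable def nearPairs (k : ℕ) (A : Finset ℂ) : Finset (ℂ × ℂ) :=
  (A ×ˢ A).filter fun p => p.1 ≠ p.2 ∧
    k * (A.filter fun x => ‖x - p.1‖ ≤ ‖p.2 - p.1‖).card ≤ 36 * A.card

lemma card_nearPairs_le (k : ℕ) (A : Finset ℂ) :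
    k * (nearPairs k A).card ≤ 36 * A.card ^ 2 := by
  have hfib : ∀ a ∈ A, k * ((nearPairs k A).filter fun p => p.1 = a).card ≤ 36 * A.card := by
    intro a ha
    rcases ((nearPairs k A).filter fun p => p.1 = a).eq_empty_or_nonempty with h | h
    · simp [h]
    · obtain ⟨q, hq, hmax⟩ := Finset.exists_max_image _ (fun p : ℂ × ℂ => ‖p.2 - a‖) h
      simp only [nearPairs, Finset.mem_filter, Finset.mem_product] at hq
      obtain ⟨⟨-, -, hq2⟩, rfl⟩ := hq
      refine le_trans (Nat.mul_le_mul_left k ?_) hq2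
      refine Finset.card_le_card_of_injOn Prod.snd ?_ ?_
      · intro p hp
        have h1 := hmax p hp
        simp only [nearPairs, Finset.coe_filter, Finset.mem_filter, Finset.mem_product,
          Set.mem_ofPred_eq] at hp ⊢
        exact ⟨hp.1.1.2, h1⟩
      · intro p hp q hq' hpq
        simp only [Finset.coe_filter, Set.mem_ofPred_eq] at hp hq'
        exact Prod.ext (hp.2.trans hq'.2.symm) hpq
  have hcard : (nearPairs k A).card
      = ∑ a ∈ A, ((nearPairs k A).filter fun p => p.1 = a).card := by
    apply Finset.card_eq_sum_card_fiberwise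
    intro p hp
    simp only [nearPairs, Finset.coe_filter, Finset.mem_product, Set.mem_ofPred_eq] at hp
    exact hp.1.1
  rw [hcard, Finset.mul_sum]
  calc ∑ a ∈ A, k * ((nearPairs k A).filter fun p => p.1 = a).card
      ≤ ∑ _a ∈ A, 36 * A.card := Finset.sum_le_sum hfib
    _ = 36 * A.card ^ 2 := by rw [Finset.sum_const, smul_eq_mul]; ring

/-- By the bounded overlap of the discs about the points `g a`, at most a quarter of them contain
more than a proportion `36 / k` of `B`. -/
lemma card_crowded_le (S : Finset ℂ) (B : Finset ℂ) (g : ℂ → ℂ) (ρ : ℂ → ℝ) (k : ℕ)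
    (hk : k ≤ S.card) (hSB : ∀ a ∈ S, g a ∈ B)
    (hpos : ∀ a ∈ S, 0 < ρ a) (hsep : ∀ a ∈ S, ∀ b ∈ S, a ≠ b → ρ a ≤ ‖g a - g b‖) :
    4 * (S.filter fun a => 36 * B.card < k * (B.filter fun x => ‖x - g a‖ ≤ ρ a).card).card
      ≤ S.card := by
  set Bad := S.filter fun a => 36 * B.card < k * (B.filter fun x => ‖x - g a‖ ≤ ρ a).card
    with hBad
  rcases S.eq_empty_or_nonempty with hS | ⟨a₀, ha₀⟩
  · simp [hBad, hS]
  have hB : 0 < B.card := Finset.card_pos.mpr ⟨_, hSB a₀ ha₀⟩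
  have hsum : ∑ a ∈ S, (B.filter fun x => ‖x - g a‖ ≤ ρ a).card ≤ 9 * B.card := by
    simp only [Finset.card_filter]
    rw [Finset.sum_comm]
    simp only [← Finset.card_filter]
    calc ∑ x ∈ B, (S.filter fun a => ‖x - g a‖ ≤ ρ a).card ≤ ∑ _x ∈ B, 9 :=
          Finset.sum_le_sum fun x _ => overlap_le_nine S g ρ hpos hsep x
      _ = 9 * B.card := by rw [Finset.sum_const, smul_eq_mul, mul_comm]
  have h1 : Bad.card * (36 * B.card) ≤ k * (9 * B.card) := by
    calc Bad.card * (36 * B.card) = ∑ _a ∈ Bad, 36 * B.card := by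
          rw [Finset.sum_const, smul_eq_mul]
      _ ≤ ∑ a ∈ Bad, k * (B.filter fun x => ‖x - g a‖ ≤ ρ a).card :=
          Finset.sum_le_sum fun a ha => (Finset.mem_filter.mp ha).2.le
      _ ≤ ∑ a ∈ S, k * (B.filter fun x => ‖x - g a‖ ≤ ρ a).card :=
          Finset.sum_le_sum_of_subset (Finset.filter_subset _ _)
      _ = k * ∑ a ∈ S, (B.filter fun x => ‖x - g a‖ ≤ ρ a).card := by rw [Finset.mul_sum]
      _ ≤ k * (9 * B.card) := Nat.mul_le_mul_left _ hsum
  have h2 : (4 * Bad.card) * (9 * B.card) ≤ k * (9 * B.card) := by linarith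
  exact (Nat.le_of_mul_le_mul_right h2 (by omega)).trans hk

/-- For at least `k / 2` points on a `k`-rich line, the segment to the nearest other point on
the line projects to a pair in `nearPairs` on both axes. -/
lemma rich_line_nearPairs (A B : Finset ℂ) (l m : ℂ) (hl : l ≠ 0) (k : ℕ) (hk2 : 2 ≤ k)
    (hk : k ≤ (A.filter fun a => l * a + m ∈ B).card) :
    k ≤ 2 * ((nearPairs k A).filter fun p =>
      (l * p.1 + m, l * p.2 + m) ∈ nearPairs k B).card := by
  set S := A.filter fun a => l * a + m ∈ B with hS
  have hex : ∀ a ∈ S, ∃ b ∈ S.erase a, ∀ c ∈ S.erase a, ‖b - a‖ ≤ ‖c - a‖ := by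
    intro a ha
    apply Finset.exists_min_image
    rw [← Finset.card_pos, Finset.card_erase_of_mem ha]
    omega
  choose! nn hnn hmin using hex
  have hne : ∀ a ∈ S, nn a ≠ a := fun a ha => (Finset.mem_erase.mp (hnn a ha)).1
  have hmem : ∀ a ∈ S, nn a ∈ S := fun a ha => (Finset.mem_erase.mp (hnn a ha)).2
  have hpos : ∀ a ∈ S, 0 < ‖nn a - a‖ := fun a ha =>
    norm_pos_iff.mpr (sub_ne_zero.mpr (hne a ha))
  have hsep : ∀ a ∈ S, ∀ b ∈ S, a ≠ b → ‖nn a - a‖ ≤ ‖a - b‖ := by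
    intro a ha b hb hab
    rw [norm_sub_rev a b]
    exact hmin a ha b (Finset.mem_erase.mpr ⟨hab.symm, hb⟩)
  have hln : 0 < ‖l‖ := norm_pos_iff.mpr hl
  have hdiff : ∀ a b : ℂ, ‖(l * a + m) - (l * b + m)‖ = ‖l‖ * ‖a - b‖ := by
    intro a b
    rw [← norm_mul]; congr 1; ring
  have hA := card_crowded_le S A (fun a => a) (fun a => ‖nn a - a‖) k hk
    (fun a ha => (Finset.mem_filter.mp ha).1) hpos hsep
  have hB := card_crowded_le S B (fun a => l * a + m) (fun a => ‖l‖ * ‖nn a - a‖) k hk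
    (fun a ha => (Finset.mem_filter.mp ha).2) (fun a ha => mul_pos hln (hpos a ha))
    (fun a ha b hb hab => by
      rw [hdiff]; exact mul_le_mul_of_nonneg_left (hsep a ha b hb hab) hln.le)
  set BadA := S.filter fun a => 36 * A.card < k * (A.filter fun x => ‖x - a‖ ≤ ‖nn a - a‖).card
  set BadB := S.filter fun a => 36 * B.card <
    k * (B.filter fun x => ‖x - (l * a + m)‖ ≤ ‖l‖ * ‖nn a - a‖).card
  have hgood : (S \ (BadA ∪ BadB)).card ≤ ((nearPairs k A).filter fun p =>
      (l * p.1 + m, l * p.2 + m) ∈ nearPairs k B).card := by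
    refine Finset.card_le_card_of_injOn (fun a => (a, nn a)) ?_ ?_
    · intro a ha
      simp only [Finset.coe_sdiff, Set.mem_sdiff, Finset.mem_coe, Finset.mem_union, not_or] at ha
      obtain ⟨haS, hnA, hnB⟩ := ha
      have h1 : k * (A.filter fun x => ‖x - a‖ ≤ ‖nn a - a‖).card ≤ 36 * A.card := by
        by_contra h
        exact hnA (Finset.mem_filter.mpr ⟨haS, not_le.mp h⟩)
      have h2 : k * (B.filter fun x => ‖x - (l * a + m)‖ ≤ ‖l‖ * ‖nn a - a‖).card
          ≤ 36 * B.card := by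
        by_contra h
        exact hnB (Finset.mem_filter.mpr ⟨haS, not_le.mp h⟩)
      have hnS := hmem a haS
      have haS' := Finset.mem_filter.mp haS
      have hnS' := Finset.mem_filter.mp hnS
      have hne' := hne a haS
      simp only [nearPairs, Finset.coe_filter, Finset.mem_filter, Finset.mem_product,
        Set.mem_ofPred_eq]
      refine ⟨⟨⟨haS'.1, hnS'.1⟩, hne'.symm, h1⟩, ⟨haS'.2, hnS'.2⟩, ?_, ?_⟩
      · intro h
        exact hne' (mul_left_cancel₀ hl (add_right_cancel h)).symm
      · rw [hdiff]; exact h2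
    · intro a _ b _ hab
      exact (Prod.mk.inj hab).1
  have h3 : S.card ≤ (S \ (BadA ∪ BadB)).card + (BadA ∪ BadB).card := by
    have := Finset.le_card_sdiff (BadA ∪ BadB) S
    omega
  have h4 := Finset.card_union_le BadA BadB
  omega

/-- The Szemerédi–Trotter bound for rich lines in a complex Cartesian product: the line
`y = l * x + m` is encoded as `(l, m)`. A line is determined by the two projections of any segment
on it, so the lines are counted by pairs of elements of `nearPairs`. -/
lemma rich_lines_le (A B : Finset ℂ) (L : Finset (ℂ × ℂ)) (k : ℕ) (hk2 : 2 ≤ k)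
    (hL0 : ∀ l ∈ L, l.1 ≠ 0)
    (hL : ∀ l ∈ L, k ≤ (A.filter fun a => l.1 * a + l.2 ∈ B).card) :
    L.card * k ^ 3 ≤ 2592 * (A.card ^ 2 * B.card ^ 2) := by
  set F : ℂ × ℂ → Finset (ℂ × ℂ) := fun l => (nearPairs k A).filter fun p =>
      (l.1 * p.1 + l.2, l.1 * p.2 + l.2) ∈ nearPairs k B with hF
  have h1 : L.card * k ≤ 2 * (L.sigma F).card := by
    rw [Finset.card_sigma, Finset.mul_sum, ← smul_eq_mul, ← Finset.sum_const]
    exact Finset.sum_le_sum fun l hl => rich_line_nearPairs A B l.1 l.2 (hL0 l hl) k hk2 (hL l hl)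
  have h2 : (L.sigma F).card ≤ (nearPairs k A).card * (nearPairs k B).card := by
    rw [← Finset.card_product]
    refine Finset.card_le_card_of_injOn
      (fun s => (s.2, (s.1.1 * s.2.1 + s.1.2, s.1.1 * s.2.2 + s.1.2))) ?_ ?_
    · intro s hs
      simp only [Finset.coe_sigma, Set.mem_sigma_iff, Finset.mem_coe, hF, Finset.mem_filter] at hs
      simp only [Finset.coe_product, Set.mem_prod, Finset.mem_coe]
      exact hs.2
    · rintro ⟨⟨l, m⟩, ⟨a, a'⟩⟩ hs ⟨⟨l', m'⟩, ⟨b, b'⟩⟩ _ h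
      simp only [Prod.mk.injEq] at h
      obtain ⟨⟨rfl, rfl⟩, e1, e2⟩ := h
      have hne : a ≠ a' := by
        simp only [Finset.coe_sigma, Set.mem_sigma_iff, Finset.mem_coe, hF, nearPairs,
          Finset.mem_filter] at hs
        exact hs.2.1.2.1
      have hl : l = l' := by
        have : (l - l') * (a - a') = 0 := by linear_combination e1 - e2
        rcases mul_eq_zero.mp this with h | h
        · exact sub_eq_zero.mp h
        · exact absurd (sub_eq_zero.mp h) hne
      subst hl
      have hm : m = m' := add_left_cancel e1
      subst hm
      rfl
  have hA := card_nearPairs_le k A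
  have hB := card_nearPairs_le k B
  calc L.card * k ^ 3 = (L.card * k) * k ^ 2 := by ring
    _ ≤ (2 * ((nearPairs k A).card * (nearPairs k B).card)) * k ^ 2 :=
        Nat.mul_le_mul_right _ (h1.trans (Nat.mul_le_mul_left _ h2))
    _ = 2 * ((k * (nearPairs k A).card) * (k * (nearPairs k B).card)) := by ring
    _ ≤ 2 * ((36 * A.card ^ 2) * (36 * B.card ^ 2)) := by gcongr
    _ = 2592 * (A.card ^ 2 * B.card ^ 2) := by ring

/-! ### Moments from the sizes of level sets -/

lemma layer_cake {ι : Type*} (s : Finset ι) (f : ι → ℕ) (N : ℕ) (hN : ∀ i ∈ s, f i ≤ N)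
    (g : ℕ → ℝ) :
    ∑ i ∈ s, ∑ j ∈ Finset.Icc 1 (f i), g j =
      ∑ j ∈ Finset.Icc 1 N, g j * ((s.filter fun i => j ≤ f i).card : ℝ) := by
  have h1 : ∀ i ∈ s, ∑ j ∈ Finset.Icc 1 (f i), g j =
      ∑ j ∈ Finset.Icc 1 N, if j ≤ f i then g j else 0 := by
    intro i hi
    rw [← Finset.sum_filter]
    refine Finset.sum_congr ?_ fun _ _ => rfl
    ext j
    simp only [Finset.mem_Icc, Finset.mem_filter]
    have := hN i hi
    omega
  rw [Finset.sum_congr rfl h1, Finset.sum_comm]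
  refine Finset.sum_congr rfl fun j _ => ?_
  rw [← Finset.sum_filter, Finset.sum_const, nsmul_eq_mul, mul_comm]

lemma sq_le_sum_Icc (m : ℕ) : (m : ℝ) ^ 2 ≤ ∑ j ∈ Finset.Icc 1 m, 2 * (j : ℝ) := by
  induction m with
  | zero => simp
  | succ m ih =>
    rw [Finset.sum_Icc_succ_top (by omega)]
    push_cast
    nlinarith

lemma cube_le_sum_Icc (m : ℕ) : (m : ℝ) ^ 3 ≤ ∑ j ∈ Finset.Icc 1 m, 3 * (j : ℝ) ^ 2 := by
  induction m with
  | zero => simp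
  | succ m ih =>
    rw [Finset.sum_Icc_succ_top (by omega)]
    push_cast
    have : (0 : ℝ) ≤ m := Nat.cast_nonneg m
    nlinarith

lemma sum_level_eq {ι : Type*} (s : Finset ι) (f : ι → ℕ) (N : ℕ) (hN : ∀ i ∈ s, f i ≤ N) :
    ∑ j ∈ Finset.Icc 1 N, ((s.filter fun i => j ≤ f i).card : ℝ) = ∑ i ∈ s, (f i : ℝ) := by
  have := layer_cake s f N hN fun _ => 1
  simp at this
  exact this.symm

lemma sum_sq_le_level {ι : Type*} (s : Finset ι) (f : ι → ℕ) (N : ℕ) (hN : ∀ i ∈ s, f i ≤ N) :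
    ∑ i ∈ s, (f i : ℝ) ^ 2 ≤
      ∑ j ∈ Finset.Icc 1 N, 2 * (j : ℝ) * ((s.filter fun i => j ≤ f i).card : ℝ) := by
  rw [← layer_cake s f N hN]
  exact Finset.sum_le_sum fun i _ => sq_le_sum_Icc (f i)

lemma sum_cube_le_level {ι : Type*} (s : Finset ι) (f : ι → ℕ) (N : ℕ)
    (hN : ∀ i ∈ s, f i ≤ N) :
    ∑ i ∈ s, (f i : ℝ) ^ 3 ≤
      ∑ j ∈ Finset.Icc 1 N, 3 * (j : ℝ) ^ 2 * ((s.filter fun i => j ≤ f i).card : ℝ) := by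
  rw [← layer_cake s f N hN]
  exact Finset.sum_le_sum fun i _ => cube_le_sum_Icc (f i)

lemma tail_inv_sq_le (N : ℕ) (J : ℝ) (hJ : 0 < J) :
    ∑ j ∈ (Finset.Icc 1 N).filter (fun j : ℕ => J < j), ((j : ℝ) ^ 2)⁻¹ ≤ 2 / J := by
  calc ∑ j ∈ (Finset.Icc 1 N).filter (fun j : ℕ => J < j), ((j : ℝ) ^ 2)⁻¹
      ≤ ∑ j ∈ Finset.Ioo ⌊J⌋₊ (N + 1), ((j : ℝ) ^ 2)⁻¹ := by
        refine Finset.sum_le_sum_of_subset_of_nonneg ?_ fun _ _ _ => by positivity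
        intro j hj
        simp only [Finset.mem_filter, Finset.mem_Icc] at hj
        rw [Finset.mem_Ioo]
        exact ⟨(Nat.floor_lt hJ.le).2 hj.2, by omega⟩
    _ ≤ 2 / ((⌊J⌋₊ : ℝ) + 1) := sum_Ioo_inv_sq_le _ _
    _ ≤ 2 / J := by
        have := Nat.lt_floor_add_one J
        gcongr

/-- If the level sets of `f` decay like `j⁻³`, the second moment of `f` is controlled by its
first moment: levels below `J = ∑ f² / (4 ∑ f)` contribute at most half of `∑ f²`, and the
remaining ones sum to `O(γ / J)`. -/
lemma second_moment_le {ι : Type*} (s : Finset ι) (f : ι → ℕ) (γ : ℝ) (hγ : 0 ≤ γ)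
    (h : ∀ j : ℕ, 2 ≤ j → ((s.filter fun i => j ≤ f i).card : ℝ) * (j : ℝ) ^ 3 ≤ γ) :
    ∑ i ∈ s, (f i : ℝ) ^ 2 ≤ 4 * ∑ i ∈ s, (f i : ℝ) ∨
      (∑ i ∈ s, (f i : ℝ) ^ 2) ^ 2 ≤ 32 * γ * ∑ i ∈ s, (f i : ℝ) := by
  by_cases hE : ∑ i ∈ s, (f i : ℝ) ^ 2 ≤ 4 * ∑ i ∈ s, (f i : ℝ)
  · exact Or.inl hE
  right
  push Not at hE
  set E := ∑ i ∈ s, (f i : ℝ) ^ 2 with hEdef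
  set S := ∑ i ∈ s, (f i : ℝ) with hSdef
  have hS0 : 0 ≤ S := Finset.sum_nonneg fun _ _ => Nat.cast_nonneg _
  have hS : 0 < S := by
    rcases hS0.lt_or_eq with h0 | h0
    · exact h0
    · exfalso
      have hz : ∀ i ∈ s, (f i : ℝ) = 0 :=
        (Finset.sum_eq_zero_iff_of_nonneg fun _ _ => Nat.cast_nonneg _).1 h0.symm
      have : E = 0 := Finset.sum_eq_zero fun i hi => by rw [hz i hi]; norm_num
      linarith
  have hE0 : 0 < E := by linarith
  set J := E / (4 * S) with hJdef
  have hJ1 : 1 < J := by rw [hJdef, lt_div_iff₀ (by positivity)]; linarith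
  obtain ⟨N, hN⟩ : ∃ N, ∀ i ∈ s, f i ≤ N := ⟨s.sup f, fun i hi => Finset.le_sup hi⟩
  have key : E ≤ 2 * J * S + 2 * γ * (2 / J) := by
    calc E ≤ _ := sum_sq_le_level s f N hN
      _ ≤ ∑ j ∈ Finset.Icc 1 N, (2 * J * ((s.filter fun i => j ≤ f i).card : ℝ) +
            if J < j then 2 * γ * ((j : ℝ) ^ 2)⁻¹ else 0) := by
          refine Finset.sum_le_sum fun j hj => ?_
          split_ifs with hjJ
          · have hj2 : 2 ≤ j := by
              have : (1 : ℝ) < j := hJ1.trans hjJ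
              exact_mod_cast this
            have hj0 : (0 : ℝ) < j := by positivity
            have := h j hj2
            have h2 : 2 * (j : ℝ) * ((s.filter fun i => j ≤ f i).card : ℝ) ≤
                2 * γ * ((j : ℝ) ^ 2)⁻¹ := by
              rw [← div_eq_mul_inv, le_div_iff₀ (by positivity)]
              nlinarith
            have h3 : 0 ≤ 2 * J * ((s.filter fun i => j ≤ f i).card : ℝ) := by positivity
            linarith
          · push Not at hjJ
            rw [add_zero]
            gcongr
      _ = 2 * J * S + 2 * γ *
            ∑ j ∈ (Finset.Icc 1 N).filter (fun j : ℕ => J < j), ((j : ℝ) ^ 2)⁻¹ := by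
          rw [Finset.sum_add_distrib, ← Finset.mul_sum, sum_level_eq s f N hN,
            ← Finset.sum_filter, ← Finset.mul_sum]
      _ ≤ _ := by
          have := tail_inv_sq_le N J (by linarith)
          gcongr
  have e1 : 2 * J * S = E / 2 := by rw [hJdef]; field_simp; norm_num
  have e2 : 2 * γ * (2 / J) = 16 * γ * S / E := by rw [hJdef]; field_simp; ring
  rw [e1, e2] at key
  have : E / 2 ≤ 16 * γ * S / E := by linarith
  rw [le_div_iff₀ hE0] at this
  nlinarith

/-- The incidence form of the Szemerédi–Trotter bound for Cartesian products. -/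
lemma incidences_le (A B : Finset ℂ) (L : Finset (ℂ × ℂ)) (hL0 : ∀ l ∈ L, l.1 ≠ 0) :
    ∑ l ∈ L, ((A.filter fun a => l.1 * a + l.2 ∈ B).card : ℝ) ≤ 4 * L.card ∨
      (∑ l ∈ L, ((A.filter fun a => l.1 * a + l.2 ∈ B).card : ℝ)) ^ 3 ≤
        32 * (2592 * ((A.card : ℝ) ^ 2 * (B.card : ℝ) ^ 2)) * (L.card : ℝ) ^ 2 := by
  have hcs : (∑ l ∈ L, ((A.filter fun a => l.1 * a + l.2 ∈ B).card : ℝ)) ^ 2 ≤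
      L.card * ∑ l ∈ L, ((A.filter fun a => l.1 * a + l.2 ∈ B).card : ℝ) ^ 2 :=
    sq_sum_le_card_mul_sum_sq
  have hI0 : 0 ≤ ∑ l ∈ L, ((A.filter fun a => l.1 * a + l.2 ∈ B).card : ℝ) :=
    Finset.sum_nonneg fun _ _ => Nat.cast_nonneg _
  have hE0 : 0 ≤ ∑ l ∈ L, ((A.filter fun a => l.1 * a + l.2 ∈ B).card : ℝ) ^ 2 :=
    Finset.sum_nonneg fun _ _ => by positivity
  have hγ : 0 ≤ 2592 * ((A.card : ℝ) ^ 2 * (B.card : ℝ) ^ 2) := by positivity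
  have hsm := second_moment_le L (fun l => (A.filter fun a => l.1 * a + l.2 ∈ B).card)
    (2592 * ((A.card : ℝ) ^ 2 * (B.card : ℝ) ^ 2)) hγ (by
      intro j hj
      exact_mod_cast rich_lines_le A B (L.filter fun l =>
        j ≤ (A.filter fun a => l.1 * a + l.2 ∈ B).card) j hj
        (fun l hl => hL0 l (Finset.mem_filter.1 hl).1)
        (fun l hl => (Finset.mem_filter.1 hl).2))
  generalize (∑ l ∈ L, ((A.filter fun a => l.1 * a + l.2 ∈ B).card : ℝ)) = I at *
  generalize (∑ l ∈ L, ((A.filter fun a => l.1 * a + l.2 ∈ B).card : ℝ) ^ 2) = E at *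
  generalize 2592 * ((A.card : ℝ) ^ 2 * (B.card : ℝ) ^ 2) = γ at *
  have hl0 : (0 : ℝ) ≤ L.card := Nat.cast_nonneg _
  generalize (L.card : ℝ) = l at *
  rcases hI0.eq_or_lt with h0 | hpos
  · left; rw [← h0]; positivity
  rcases hsm with h | h
  · left
    refine le_of_mul_le_mul_right ?_ hpos
    have := mul_le_mul_of_nonneg_left h hl0
    linarith
  · right
    refine le_of_mul_le_mul_right ?_ hpos
    calc I ^ 3 * I = (I ^ 2) ^ 2 := by ring
      _ ≤ (l * E) ^ 2 := by gcongr
      _ = l ^ 2 * E ^ 2 := by ring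
      _ ≤ l ^ 2 * (32 * γ * I) := by gcongr
      _ = _ := by ring

/-! ### Differences of `A` with an arbitrary set -/

/-- The number of representations `w = s - b` with `s ∈ S` and `b ∈ B`. -/
noncomputable def diffRep (S B : Finset ℂ) (w : ℂ) : ℕ := (B.filter fun b => w + b ∈ S).card

lemma diffRep_le_left (S B : Finset ℂ) (w : ℂ) : diffRep S B w ≤ S.card :=
  Finset.card_le_card_of_injOn (fun b => w + b)
    (fun _ hb => (Finset.mem_filter.1 (Finset.mem_coe.1 hb)).2)
    (fun _ _ _ _ h => add_left_cancel h)

lemma diffRep_le_right (S B : Finset ℂ) (w : ℂ) : diffRep S B w ≤ B.card :=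
  Finset.card_filter_le _ _

lemma mem_sub_of_diffRep_pos {S B : Finset ℂ} {w : ℂ} (h : 0 < diffRep S B w) : w ∈ S - B := by
  obtain ⟨b, hb⟩ := Finset.card_pos.1 h
  rw [Finset.mem_filter] at hb
  exact Finset.mem_sub.2 ⟨w + b, hb.2, b, hb.1, by ring⟩

lemma sum_diffRep (S B : Finset ℂ) :
    ∑ w ∈ S - B, (diffRep S B w : ℝ) = S.card * B.card := by
  have h : ∑ w ∈ S - B, diffRep S B w = S.card * B.card := by
    have hmap : ∀ p ∈ S ×ˢ B, p.1 - p.2 ∈ S - B := fun p hp =>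
      Finset.sub_mem_sub (Finset.mem_product.1 hp).1 (Finset.mem_product.1 hp).2
    rw [← Finset.card_product, Finset.card_eq_sum_card_fiberwise hmap]
    refine Finset.sum_congr rfl fun w _ => ?_
    refine Finset.card_nbij' (fun b => (w + b, b)) (fun p => p.2) ?_ ?_ ?_ ?_
    · intro b hb
      simp only [Finset.coe_filter, Set.mem_ofPred_eq, Finset.mem_product] at hb ⊢
      exact ⟨⟨hb.2, hb.1⟩, by ring⟩
    · rintro ⟨s, b⟩ hp
      simp only [Finset.coe_filter, Set.mem_ofPred_eq, Finset.mem_product] at hp ⊢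
      refine ⟨hp.1.2, ?_⟩
      rw [← hp.2]; simpa using hp.1.1
    · intro b _; rfl
    · rintro ⟨s, b⟩ hp
      simp only [Finset.coe_filter, Set.mem_ofPred_eq, Finset.mem_product] at hp ⊢
      rw [← hp.2]; simp
  exact_mod_cast h

lemma card_le_card_mul_self (A : Finset ℂ) (h0 : (0 : ℂ) ∉ A) (hA : A.Nonempty) :
    A.card ≤ (A * A).card := by
  obtain ⟨c, hc⟩ := hA
  exact Finset.card_le_card_of_injOn (fun a => c * a)
    (fun a ha => Finset.mul_mem_mul hc ha)
    (fun _ _ _ _ h => mul_left_cancel₀ (fun hz => h0 (hz ▸ hc)) h)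

/-- Few `w` have many representations as a difference `a - b`, `a ∈ A`, `b ∈ D`: if
`x + b ∈ A`, the line `y = c * x + c * b` with `c ∈ A` meets `X × (A * A)` above `x`. -/
lemma popular_sub_le (A D X : Finset ℂ) (h0 : (0 : ℂ) ∉ A) (hA : A.Nonempty)
    (hD : A.card ≤ D.card) (τ : ℕ) (hX : ∀ w ∈ X, τ ≤ diffRep A D w) :
    (A.card : ℝ) * (X.card * (τ : ℝ) ^ 3) ≤ 82944 * ((A * A).card : ℝ) ^ 2 * (D.card : ℝ) ^ 2 := by
  have hn : (0 : ℝ) < A.card := by exact_mod_cast hA.card_pos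
  have hDn : (A.card : ℝ) ≤ D.card := by exact_mod_cast hD
  have hQ : (A.card : ℝ) ≤ (A * A).card := by
    exact_mod_cast card_le_card_mul_self A h0 hA
  rcases X.eq_empty_or_nonempty with rfl | ⟨w0, hw0⟩
  · simp; positivity
  have hτn : (τ : ℝ) ≤ A.card := by
    exact_mod_cast (hX w0 hw0).trans (diffRep_le_left A D w0)
  have hXpos : (0 : ℝ) < X.card := by exact_mod_cast Finset.card_pos.2 ⟨w0, hw0⟩
  have hne : ∀ c ∈ A, c ≠ 0 := fun c hc h => h0 (h ▸ hc)
  have hinj : Set.InjOn (fun p : ℂ × ℂ => (p.1, p.1 * p.2)) ((A ×ˢ D : Finset (ℂ × ℂ)) : Set (ℂ × ℂ)) := by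
    rintro ⟨c, b⟩ hp ⟨c', b'⟩ _ h
    simp only [Prod.mk.injEq] at h ⊢
    obtain ⟨rfl, h⟩ := h
    exact ⟨rfl, mul_left_cancel₀ (hne c (Finset.mem_product.1 (Finset.mem_coe.1 hp)).1) h⟩
  set L := (A ×ˢ D).image (fun p : ℂ × ℂ => (p.1, p.1 * p.2)) with hLdef
  have hLcard : (L.card : ℝ) = A.card * D.card := by
    rw [hLdef, Finset.card_image_of_injOn hinj, Finset.card_product]; push_cast; rfl
  have hI : (A.card : ℝ) * (X.card * τ) ≤
      ∑ l ∈ L, ((X.filter fun a => l.1 * a + l.2 ∈ A * A).card : ℝ) := by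
    rw [hLdef, Finset.sum_image hinj, Finset.sum_product]
    rw [← nsmul_eq_mul]
    refine Finset.card_nsmul_le_sum _ _ _ fun c hc => ?_
    have hsw : ∑ b ∈ D, (X.filter fun x => x + b ∈ A).card = ∑ x ∈ X, diffRep A D x := by
      simp only [diffRep, Finset.card_filter]
      exact Finset.sum_comm
    calc (X.card : ℝ) * τ ≤ ((∑ x ∈ X, diffRep A D x : ℕ) : ℝ) := by
          exact_mod_cast Finset.card_nsmul_le_sum X _ τ hX
      _ = ∑ b ∈ D, ((X.filter fun x => x + b ∈ A).card : ℝ) := by rw [← hsw]; push_cast; rfl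
      _ ≤ _ := by
          refine Finset.sum_le_sum fun b _ => ?_
          norm_cast
          refine Finset.card_le_card fun x hx => ?_
          rw [Finset.mem_filter] at hx ⊢
          refine ⟨hx.1, ?_⟩
          have := Finset.mul_mem_mul hc hx.2
          rwa [mul_add] at this
  have hinc := incidences_le X (A * A) L (by
    intro l hl
    obtain ⟨p, hp, rfl⟩ := Finset.mem_image.1 hl
    exact hne _ (Finset.mem_product.1 hp).1)
  rw [hLcard] at hinc
  have hτ0 : (0 : ℝ) ≤ τ := Nat.cast_nonneg _
  generalize (∑ l ∈ L, ((X.filter fun a => l.1 * a + l.2 ∈ A * A).card : ℝ)) = I at *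
  generalize ((A * A).card : ℝ) = Q at *
  generalize (A.card : ℝ) = n at *
  generalize (D.card : ℝ) = d at *
  generalize (X.card : ℝ) = x at *
  generalize (τ : ℝ) = t at *
  have hd0 : 0 < d := by linarith
  have hQ0 : 0 < Q := by linarith
  rcases hinc with h | h
  · have h1 : x * t ≤ 4 * d := by
      refine le_of_mul_le_mul_left ?_ hn
      linarith
    calc n * (x * t ^ 3) = n * (x * t) * t ^ 2 := by ring
      _ ≤ n * (4 * d) * n ^ 2 := by gcongr
      _ = 4 * n ^ 2 * (d * n) := by ring
      _ ≤ 4 * Q ^ 2 * (d * d) := by gcongr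
      _ ≤ 82944 * Q ^ 2 * d ^ 2 := by
        have : 0 ≤ Q ^ 2 * d ^ 2 := by positivity
        nlinarith
  · have h1 : (n * (x * t)) ^ 3 ≤ I ^ 3 := by gcongr
    have h2 := h1.trans h
    have hc : (0 : ℝ) < n ^ 2 * x ^ 2 := by positivity
    refine le_of_mul_le_mul_left ?_ hc
    linarith

/-- The additive energy of `A` and `D`. -/
noncomputable def energy (A D : Finset ℂ) : ℝ := ∑ w ∈ A - D, (diffRep A D w : ℝ) ^ 2

lemma energy_sq_le (A D : Finset ℂ) (h0 : (0 : ℂ) ∉ A) (hA : A.Nonempty)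
    (hD : A.card ≤ D.card) :
    energy A D ^ 2 ≤ 2654208 * ((A * A).card : ℝ) ^ 2 * (D.card : ℝ) ^ 3 := by
  have hn : (0 : ℝ) < A.card := by exact_mod_cast hA.card_pos
  have hD1 : (1 : ℝ) ≤ D.card := by exact_mod_cast hA.card_pos.trans_le hD
  have hQ : (A.card : ℝ) ≤ (A * A).card := by
    exact_mod_cast card_le_card_mul_self A h0 hA
  have hE0 : 0 ≤ energy A D := Finset.sum_nonneg fun _ _ => by positivity
  have := second_moment_le (A - D) (diffRep A D)
    (82944 * ((A * A).card : ℝ) ^ 2 * (D.card : ℝ) ^ 2 / A.card) (by positivity) (by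
      intro j _
      rw [le_div_iff₀ hn, mul_comm]
      exact popular_sub_le A D _ h0 hA hD j fun w hw => (Finset.mem_filter.1 hw).2)
  rw [sum_diffRep] at this
  change energy A D ≤ _ ∨ energy A D ^ 2 ≤ _ at this
  generalize energy A D = E at *
  generalize ((A * A).card : ℝ) = Q at *
  generalize (A.card : ℝ) = n at *
  generalize (D.card : ℝ) = d at *
  rcases this with h | h
  · calc E ^ 2 ≤ (4 * (n * d)) ^ 2 := by gcongr
      _ = 16 * n ^ 2 * (d ^ 2 * 1) := by ring
      _ ≤ 2654208 * Q ^ 2 * (d ^ 2 * d) := by gcongr; norm_num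
      _ = _ := by ring
  · refine h.trans (le_of_eq ?_)
    field_simp
    ring

/-! ### Popular differences of `A` and ratios -/

/-- The number of pairs in a common fibre of `f` is the sum of the squares of the fibre sizes. -/
lemma sum_sq_card_fiber {σ κ : Type*} (S : Finset σ) (T : Finset κ) (f : σ → κ)
    (hf : ∀ s ∈ S, f s ∈ T) :
    ∑ t ∈ T, ((S.filter fun s => f s = t).card : ℝ) ^ 2 =
      (((S ×ˢ S).filter fun p => f p.1 = f p.2).card : ℝ) := by
  have hmap : ∀ p ∈ (S ×ˢ S).filter (fun p => f p.1 = f p.2), f p.1 ∈ T := fun p hp =>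
    hf _ (Finset.mem_product.1 (Finset.mem_filter.1 hp).1).1
  rw [Finset.card_eq_sum_card_fiberwise hmap]
  push_cast
  refine Finset.sum_congr rfl fun t _ => ?_
  rw [sq, ← Nat.cast_mul, ← Finset.card_product]
  congr 2
  ext p
  simp only [Finset.mem_product, Finset.mem_filter]
  constructor
  · rintro ⟨⟨h1, h2⟩, h3, h4⟩
    exact ⟨⟨⟨h1, h3⟩, h2.trans h4.symm⟩, h2⟩
  · rintro ⟨⟨⟨h1, h3⟩, h5⟩, h2⟩
    exact ⟨⟨h1, h2⟩, h3, h5 ▸ h2⟩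

/-- Cauchy–Schwarz over the fibres of `f`. -/
lemma card_sq_le_collisions {σ κ : Type*} (S : Finset σ) (T : Finset κ) (f : σ → κ)
    (hf : ∀ s ∈ S, f s ∈ T) :
    (S.card : ℝ) ^ 2 ≤ T.card * (((S ×ˢ S).filter fun p => f p.1 = f p.2).card : ℝ) := by
  rw [← sum_sq_card_fiber S T f hf, Finset.card_eq_sum_card_fiberwise hf]
  push_cast
  exact sq_sum_le_card_mul_sum_sq

/-- Few slopes `l` can have the property that the lines of slope `l` partition `P × Q` very
unevenly. -/
lemma rich_slopes_le (P Q R M : Finset ℂ) (hR0 : (0 : ℂ) ∉ R) (K : ℝ)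
    (hK : 4 * ((P.card : ℝ) * Q.card) < K)
    (h : ∀ l ∈ R, K ≤ ∑ m ∈ M, ((P.filter fun p => l * p + m ∈ Q).card : ℝ) ^ 2) :
    (R.card : ℝ) * K ^ 2 ≤ 82944 * ((P.card : ℝ) * Q.card) ^ 3 := by
  have hw0 : 0 ≤ (P.card : ℝ) * Q.card := by positivity
  rcases R.eq_empty_or_nonempty with rfl | hR
  · simp; positivity
  have hRpos : (0 : ℝ) < R.card := by exact_mod_cast hR.card_pos
  have hE : R.card * K ≤
      ∑ l ∈ R ×ˢ M, ((P.filter fun p => l.1 * p + l.2 ∈ Q).card : ℝ) ^ 2 := by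
    rw [Finset.sum_product, ← nsmul_eq_mul]
    exact Finset.card_nsmul_le_sum _ _ _ h
  have hS : ∑ l ∈ R ×ˢ M, ((P.filter fun p => l.1 * p + l.2 ∈ Q).card : ℝ) ≤
      R.card * ((P.card : ℝ) * Q.card) := by
    rw [Finset.sum_product, ← nsmul_eq_mul]
    refine Finset.sum_le_card_nsmul _ _ _ fun l _ => ?_
    simp only [Finset.card_filter]
    push_cast
    rw [Finset.sum_comm, ← nsmul_eq_mul]
    refine Finset.sum_le_card_nsmul _ _ _ fun p _ => ?_
    rw [← Finset.sum_filter]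
    simp only [Finset.sum_const, nsmul_eq_mul, mul_one]
    norm_cast
    exact Finset.card_le_card_of_injOn (fun m => l * p + m)
      (fun _ hm => (Finset.mem_filter.1 (Finset.mem_coe.1 hm)).2)
      (fun _ _ _ _ h => add_left_cancel h)
  have hsm := second_moment_le (R ×ˢ M)
    (fun l => (P.filter fun p => l.1 * p + l.2 ∈ Q).card)
    (2592 * ((P.card : ℝ) ^ 2 * (Q.card : ℝ) ^ 2)) (by positivity) (by
      intro j hj
      exact_mod_cast rich_lines_le P Q ((R ×ˢ M).filter fun l =>
        j ≤ (P.filter fun p => l.1 * p + l.2 ∈ Q).card) j hj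
        (fun l hl h0 => hR0 (h0 ▸ (Finset.mem_product.1 (Finset.mem_filter.1 hl).1).1))
        (fun l hl => (Finset.mem_filter.1 hl).2))
  generalize (∑ l ∈ R ×ˢ M, ((P.filter fun p => l.1 * p + l.2 ∈ Q).card : ℝ)) = S at *
  generalize (∑ l ∈ R ×ˢ M, ((P.filter fun p => l.1 * p + l.2 ∈ Q).card : ℝ) ^ 2) = E at *
  rw [← mul_pow] at hsm
  generalize (P.card : ℝ) * Q.card = w at *
  generalize (R.card : ℝ) = r at *
  have hK0 : 0 < K := by linarith
  rcases hsm with h1 | h1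
  · exfalso
    have := mul_lt_mul_of_pos_left hK hRpos
    linarith
  · refine le_of_mul_le_mul_left ?_ hRpos
    calc r * (r * K ^ 2) = (r * K) ^ 2 := by ring
      _ ≤ E ^ 2 := by gcongr
      _ ≤ _ := h1
      _ ≤ 32 * (2592 * w ^ 2) * (r * w) := by gcongr
      _ = _ := by ring

/-- The pairs `(a, d) ∈ A × X` with `a + d ∈ A`. -/
noncomputable def shiftPairs (A X : Finset ℂ) : Finset (ℂ × ℂ) :=
  (A ×ˢ X).filter fun w => w.1 + w.2 ∈ A

/-- The number of pairs of elements of `shiftPairs A X` whose coordinate sums have ratio `l`. -/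
noncomputable def ratioCount (A X : Finset ℂ) (l : ℂ) : ℕ :=
  ((shiftPairs A X ×ˢ shiftPairs A X).filter fun q =>
    q.1.1 + q.1.2 = l * (q.2.1 + q.2.2)).card

lemma mem_shiftPairs {A X : Finset ℂ} {w : ℂ × ℂ} :
    w ∈ shiftPairs A X ↔ (w.1 ∈ A ∧ w.2 ∈ X) ∧ w.1 + w.2 ∈ A := by
  rw [shiftPairs, Finset.mem_filter, Finset.mem_product]

/-- An equation `a + d = l * (a' + d')` places `m = a - l * d' = l * a' - d` on both of the
lines of slope `l` through `(d', a) ∈ X × A` and `(a', d) ∈ A × X`. -/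
lemma ratioCount_le (A X M : Finset ℂ) (l : ℂ) (hM : ∀ a ∈ A, ∀ d ∈ X, a - l * d ∈ M) :
    (ratioCount A X l : ℝ) ≤
      ∑ m ∈ M, ((X.filter fun d => l * d + m ∈ A).card : ℝ) *
        ((A.filter fun a => l * a + (-m) ∈ X).card : ℝ) := by
  have hmap : ∀ q ∈ (shiftPairs A X ×ˢ shiftPairs A X).filter (fun q =>
      q.1.1 + q.1.2 = l * (q.2.1 + q.2.2)), q.1.1 - l * q.2.2 ∈ M := by
    intro q hq
    rw [Finset.mem_filter, Finset.mem_product, mem_shiftPairs, mem_shiftPairs] at hq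
    exact hM _ hq.1.1.1.1 _ hq.1.2.1.2
  rw [ratioCount, Finset.card_eq_sum_card_fiberwise hmap]
  push_cast
  refine Finset.sum_le_sum fun m _ => ?_
  rw [← Nat.cast_mul, ← Finset.card_product, Nat.cast_le]
  refine Finset.card_le_card_of_injOn (fun q => (q.2.2, q.2.1)) ?_ ?_
  · intro q hq
    simp only [Finset.coe_filter, Set.mem_ofPred_eq, Finset.mem_filter, Finset.mem_product,
      mem_shiftPairs] at hq
    obtain ⟨⟨⟨⟨⟨h1, h2⟩, h3⟩, ⟨h4, h5⟩, h6⟩, h7⟩, h8⟩ := hq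
    simp only [Finset.coe_product, Finset.coe_filter, Set.mem_prod, Set.mem_ofPred_eq]
    refine ⟨⟨h5, ?_⟩, h4, ?_⟩
    · rw [← h8]; simpa using h1
    · have : l * q.2.1 + -m = q.1.2 := by rw [← h8]; linear_combination -h7
      rwa [this]
  · rintro ⟨⟨a, d⟩, a', d'⟩ hq ⟨⟨b, e⟩, b', e'⟩ hq' h
    simp only [Finset.coe_filter, Set.mem_ofPred_eq, Finset.mem_filter] at hq hq'
    simp only [Prod.mk.injEq] at h ⊢
    obtain ⟨rfl, rfl⟩ := h
    have e1 : a = b := by linear_combination hq.2 - hq'.2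
    refine ⟨⟨e1, ?_⟩, rfl, rfl⟩
    linear_combination hq.1.2 - hq'.1.2 - e1

lemma rich_ratios_le (A X : Finset ℂ) (h0 : (0 : ℂ) ∉ A) (j : ℕ)
    (hj : 4 * ((A.card : ℝ) * X.card) < j) :
    (((A / A).filter fun l => j ≤ ratioCount A X l).card : ℝ) * (j : ℝ) ^ 2 ≤
      165888 * ((A.card : ℝ) * X.card) ^ 3 := by
  set M : Finset ℂ := (((A / A) ×ˢ (A ×ˢ X)).image fun t => t.2.1 - t.1 * t.2.2) with hM
  have hne : (0 : ℂ) ∉ A / A := by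
    intro h
    obtain ⟨a, ha, b, hb, hab⟩ := Finset.mem_div.1 h
    rcases div_eq_zero_iff.1 hab with h | h
    · exact h0 (h ▸ ha)
    · exact h0 (h ▸ hb)
  set R1 := (A / A).filter fun l =>
    (j : ℝ) ≤ ∑ m ∈ M, ((X.filter fun d => l * d + m ∈ A).card : ℝ) ^ 2 with hR1
  set R2 := (A / A).filter fun l =>
    (j : ℝ) ≤ ∑ m ∈ M.image (fun m => -m), ((A.filter fun a => l * a + m ∈ X).card : ℝ) ^ 2
    with hR2
  have h1 := rich_slopes_le X A R1 M (fun h => hne (Finset.mem_filter.1 h).1) j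
    (by rw [mul_comm (X.card : ℝ)]; exact hj) (fun l hl => (Finset.mem_filter.1 hl).2)
  have h2 := rich_slopes_le A X R2 (M.image fun m => -m)
    (fun h => hne (Finset.mem_filter.1 h).1) j hj (fun l hl => (Finset.mem_filter.1 hl).2)
  have hsub : ((A / A).filter fun l => j ≤ ratioCount A X l) ⊆ R1 ∪ R2 := by
    intro l hl
    rw [Finset.mem_filter] at hl
    have hN := ratioCount_le A X M l (by
      intro a ha d hd
      exact Finset.mem_image.2 ⟨(l, a, d), by simp [hl.1, ha, hd], rfl⟩)
    have hj' : (j : ℝ) ≤ ratioCount A X l := by exact_mod_cast hl.2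
    have hneg : ∑ m ∈ M.image (fun m => -m), ((A.filter fun a => l * a + m ∈ X).card : ℝ) ^ 2 =
        ∑ m ∈ M, ((A.filter fun a => l * a + (-m) ∈ X).card : ℝ) ^ 2 :=
      Finset.sum_image fun _ _ _ _ h => neg_injective h
    have ham : 2 * ∑ m ∈ M, ((X.filter fun d => l * d + m ∈ A).card : ℝ) *
        ((A.filter fun a => l * a + (-m) ∈ X).card : ℝ) ≤
        ∑ m ∈ M, ((X.filter fun d => l * d + m ∈ A).card : ℝ) ^ 2 +
        ∑ m ∈ M, ((A.filter fun a => l * a + (-m) ∈ X).card : ℝ) ^ 2 := by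
      rw [Finset.mul_sum, ← Finset.sum_add_distrib]
      refine Finset.sum_le_sum fun m _ => ?_
      have := two_mul_le_add_sq ((X.filter fun d => l * d + m ∈ A).card : ℝ)
        ((A.filter fun a => l * a + (-m) ∈ X).card : ℝ)
      linarith
    rw [Finset.mem_union, hR1, hR2, Finset.mem_filter, Finset.mem_filter, hneg]
    by_contra hcon
    push Not at hcon
    have c1 := hcon.1 hl.1
    have c2 := hcon.2 hl.1
    linarith
  have hcard : (((A / A).filter fun l => j ≤ ratioCount A X l).card : ℝ) ≤ R1.card + R2.card := by
    exact_mod_cast (Finset.card_le_card hsub).trans (Finset.card_union_le _ _)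
  rw [mul_comm (X.card : ℝ)] at h1
  have hj0 : (0 : ℝ) ≤ (j : ℝ) ^ 2 := by positivity
  have := mul_le_mul_of_nonneg_right hcard hj0
  linarith

lemma ratioCount_eq (A X : Finset ℂ) (h0 : (0 : ℂ) ∉ A) (l : ℂ) :
    ratioCount A X l = ((shiftPairs A X ×ˢ shiftPairs A X).filter fun q =>
      (q.1.1 + q.1.2) / (q.2.1 + q.2.2) = l).card := by
  rw [ratioCount]
  congr 1
  refine Finset.filter_congr fun q hq => ?_
  have hz : q.2.1 + q.2.2 ≠ 0 := fun h =>
    h0 (h ▸ (mem_shiftPairs.1 (Finset.mem_product.1 hq).2).2)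
  rw [div_eq_iff hz]

lemma ratio_mem (A X : Finset ℂ) : ∀ q ∈ shiftPairs A X ×ˢ shiftPairs A X,
    (q.1.1 + q.1.2) / (q.2.1 + q.2.2) ∈ A / A := fun _ hq =>
  Finset.div_mem_div (mem_shiftPairs.1 (Finset.mem_product.1 hq).1).2
    (mem_shiftPairs.1 (Finset.mem_product.1 hq).2).2

lemma sum_ratioCount (A X : Finset ℂ) (h0 : (0 : ℂ) ∉ A) :
    ∑ l ∈ A / A, (ratioCount A X l : ℝ) = ((shiftPairs A X).card : ℝ) ^ 2 := by
  have h := Finset.card_eq_sum_card_fiberwise (ratio_mem A X)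
  rw [Finset.card_product] at h
  rw [sq, ← Nat.cast_mul, h]
  push_cast
  exact Finset.sum_congr rfl fun l _ => by rw [ratioCount_eq A X h0]

/-- `z₁ z₂ = z₃ z₄` is the same as `z₁ / z₃ = z₄ / z₂`, so the multiplicative energy may be counted
through products or through ratios. -/
lemma card_shiftPairs_pow_le (A X : Finset ℂ) (h0 : (0 : ℂ) ∉ A) :
    ((shiftPairs A X).card : ℝ) ^ 4 ≤
      (A * A).card * ∑ l ∈ A / A, (ratioCount A X l : ℝ) ^ 2 := by
  set W := shiftPairs A X with hW
  have h1 := card_sq_le_collisions (W ×ˢ W) (A * A)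
    (fun q => (q.1.1 + q.1.2) * (q.2.1 + q.2.2)) (fun q hq =>
      Finset.mul_mem_mul (mem_shiftPairs.1 (Finset.mem_product.1 hq).1).2
        (mem_shiftPairs.1 (Finset.mem_product.1 hq).2).2)
  have h2 := sum_sq_card_fiber (W ×ˢ W) (A / A)
    (fun q => (q.1.1 + q.1.2) / (q.2.1 + q.2.2)) (ratio_mem A X)
  have h3 : ∑ l ∈ A / A, (ratioCount A X l : ℝ) ^ 2 =
      ∑ l ∈ A / A, (((W ×ˢ W).filter fun q =>
        (q.1.1 + q.1.2) / (q.2.1 + q.2.2) = l).card : ℝ) ^ 2 :=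
    Finset.sum_congr rfl fun l _ => by rw [ratioCount_eq A X h0]
  rw [Finset.card_product] at h1
  rw [h3, h2]
  calc ((W.card : ℝ)) ^ 4 = ((W.card * W.card : ℕ) : ℝ) ^ 2 := by push_cast; ring
    _ ≤ _ := h1
    _ ≤ _ := by
      refine mul_le_mul_of_nonneg_left ?_ (Nat.cast_nonneg _)
      rw [Nat.cast_le]
      refine Finset.card_le_card_of_injOn
        (fun p => ((p.1.1, p.2.1), (p.2.2, p.1.2))) ?_ ?_
      · rintro ⟨⟨w1, w2⟩, w3, w4⟩ hp
        simp only [Finset.coe_filter, Set.mem_ofPred_eq, Finset.mem_product] at hp ⊢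
        obtain ⟨⟨⟨a1, a2⟩, a3, a4⟩, h⟩ := hp
        refine ⟨⟨⟨a1, a3⟩, a4, a2⟩, ?_⟩
        have n2 : w2.1 + w2.2 ≠ 0 := fun h => h0 (h ▸ (mem_shiftPairs.1 a2).2)
        have n3 : w3.1 + w3.2 ≠ 0 := fun h => h0 (h ▸ (mem_shiftPairs.1 a3).2)
        rw [div_eq_div_iff n3 n2]
        linear_combination h
      · rintro ⟨⟨w1, w2⟩, w3, w4⟩ _ ⟨⟨v1, v2⟩, v3, v4⟩ _ h
        simp only [Prod.mk.injEq] at h ⊢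
        tauto

lemma card_shiftPairs (A X : Finset ℂ) :
    (shiftPairs A X).card = ∑ d ∈ X, diffRep A A d := by
  simp only [shiftPairs, diffRep, Finset.card_filter, Finset.sum_product]
  rw [Finset.sum_comm]
  simp only [add_comm]

lemma card_shiftPairs_le_sq (A X : Finset ℂ) : (shiftPairs A X).card ≤ A.card ^ 2 := by
  rw [sq, ← Finset.card_product]
  refine Finset.card_le_card_of_injOn (fun w => (w.1, w.1 + w.2)) ?_ ?_
  · intro w hw
    have := mem_shiftPairs.1 (Finset.mem_coe.1 hw)
    simp [this.1.1, this.2]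
  · rintro ⟨a, d⟩ _ ⟨b, e⟩ _ h
    simp only [Prod.mk.injEq] at h ⊢
    obtain ⟨rfl, h⟩ := h
    exact ⟨rfl, add_left_cancel h⟩

lemma sum_ratioCount_sq_le (A X : Finset ℂ) (h0 : (0 : ℂ) ∉ A) (hA : 2 ≤ A.card) :
    ∑ l ∈ A / A, (ratioCount A X l : ℝ) ^ 2 ≤
      2000000 * ((A.card : ℝ) * X.card) ^ 3 * Real.log A.card := by
  set N := A.card ^ 4 with hN
  have hbound : ∀ l ∈ A / A, ratioCount A X l ≤ N := by
    intro l _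
    calc ratioCount A X l ≤ (shiftPairs A X ×ˢ shiftPairs A X).card := Finset.card_filter_le _ _
      _ = (shiftPairs A X).card * (shiftPairs A X).card := Finset.card_product _ _
      _ ≤ A.card ^ 2 * A.card ^ 2 :=
        Nat.mul_le_mul (card_shiftPairs_le_sq A X) (card_shiftPairs_le_sq A X)
      _ = N := by rw [hN]; ring
  have hW : ((shiftPairs A X).card : ℝ) ≤ (A.card : ℝ) * X.card := by
    rw [← Nat.cast_mul, ← Finset.card_product]
    exact_mod_cast Finset.card_filter_le _ _
  have hharm : ∑ j ∈ Finset.Icc 1 N, ((j : ℝ))⁻¹ ≤ 1 + 4 * Real.log A.card := by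
    have := harmonic_le_one_add_log N
    rw [harmonic_eq_sum_Icc] at this
    push_cast at this
    rwa [hN, Nat.cast_pow, Real.log_pow] at this
  have hlog : 1 / 2 ≤ Real.log A.card := by
    have h2 : Real.log 2 ≤ Real.log A.card :=
      Real.log_le_log (by norm_num) (by exact_mod_cast hA)
    have := Real.log_two_gt_d9
    linarith
  have hrich := rich_ratios_le A X h0
  have hsum := sum_ratioCount A X h0
  have hlev := sum_level_eq (A / A) (ratioCount A X) N hbound
  have hw0 : 0 ≤ (A.card : ℝ) * X.card := by positivity
  refine (sum_sq_le_level (A / A) (ratioCount A X) N hbound).trans ?_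
  generalize (A.card : ℝ) * X.card = w at *
  generalize Real.log (A.card : ℝ) = t at *
  calc ∑ j ∈ Finset.Icc 1 N, 2 * (j : ℝ) *
        (((A / A).filter fun l => j ≤ ratioCount A X l).card : ℝ)
      ≤ ∑ j ∈ Finset.Icc 1 N, (8 * w *
        (((A / A).filter fun l => j ≤ ratioCount A X l).card : ℝ) +
          331776 * w ^ 3 * (j : ℝ)⁻¹) := by
        refine Finset.sum_le_sum fun j hj => ?_
        have hj1 : (0 : ℝ) < j := by exact_mod_cast (Finset.mem_Icc.1 hj).1
        have hc0 : (0 : ℝ) ≤ (((A / A).filter fun l => j ≤ ratioCount A X l).card : ℝ) :=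
          Nat.cast_nonneg _
        rcases lt_or_ge (4 * w) (j : ℝ) with hjw | hjw
        · have h1 := hrich j hjw
          have h2 : 2 * (j : ℝ) * (((A / A).filter fun l => j ≤ ratioCount A X l).card : ℝ) ≤
              331776 * w ^ 3 * (j : ℝ)⁻¹ := by
            rw [← div_eq_mul_inv, le_div_iff₀ hj1]
            linarith
          have h3 : 0 ≤ 8 * w * (((A / A).filter fun l => j ≤ ratioCount A X l).card : ℝ) := by
            positivity
          linarith
        · have h3 : 0 ≤ 331776 * w ^ 3 * (j : ℝ)⁻¹ := by positivity
          have := mul_le_mul_of_nonneg_right hjw hc0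
          linarith
    _ = 8 * w * ((shiftPairs A X).card : ℝ) ^ 2 +
          331776 * w ^ 3 * ∑ j ∈ Finset.Icc 1 N, ((j : ℝ))⁻¹ := by
        rw [Finset.sum_add_distrib, ← Finset.mul_sum, ← Finset.mul_sum, hlev, hsum]
    _ ≤ 8 * w * w ^ 2 + 331776 * w ^ 3 * (1 + 4 * t) := by gcongr
    _ ≤ 2000000 * w ^ 3 * t := by
        have : 0 ≤ w ^ 3 := by positivity
        nlinarith

/-- The fourth-power bound for the number of popular differences of `A`. -/
lemma popular_diff_le (A X : Finset ℂ) (h0 : (0 : ℂ) ∉ A) (hA : 2 ≤ A.card) (τ : ℕ)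
    (hX : ∀ d ∈ X, τ ≤ diffRep A A d) :
    (X.card : ℝ) * (τ : ℝ) ^ 4 ≤
      2000000 * (A * A).card * (A.card : ℝ) ^ 3 * Real.log A.card := by
  have hlog : 0 ≤ Real.log A.card := Real.log_natCast_nonneg _
  rcases X.eq_empty_or_nonempty with rfl | hXne
  · simp; positivity
  have hXpos : (0 : ℝ) < X.card := by exact_mod_cast hXne.card_pos
  have hW : (X.card : ℝ) * τ ≤ (shiftPairs A X).card := by
    rw [card_shiftPairs]
    exact_mod_cast Finset.card_nsmul_le_sum X _ τ hX
  have h4 := card_shiftPairs_pow_le A X h0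
  have h2 := sum_ratioCount_sq_le A X h0 hA
  refine le_of_mul_le_mul_left ?_ (pow_pos hXpos 3)
  calc (X.card : ℝ) ^ 3 * (X.card * (τ : ℝ) ^ 4) = (X.card * (τ : ℝ)) ^ 4 := by ring
    _ ≤ ((shiftPairs A X).card : ℝ) ^ 4 := by gcongr
    _ ≤ _ := h4
    _ ≤ (A * A).card * (2000000 * ((A.card : ℝ) * X.card) ^ 3 * Real.log A.card) := by gcongr
    _ = _ := by ring

/-! ### Third moment of the difference representation function -/

/-- The third moment of the number of representations of a difference. -/
noncomputable def thirdMoment (A : Finset ℂ) : ℝ := ∑ d ∈ A - A, (diffRep A A d : ℝ) ^ 3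

/-- Two triples `(b, x, c)`, `(b', x, c')` with `b - c = b' - c'` differ by a common shift `δ`, and
`b`, `c`, `b + x` all lie in `A ∩ (A - δ)`. -/
lemma collisions_le_thirdMoment (A P : Finset ℂ) :
    ((((shiftPairs A P ×ˢ A) ×ˢ (shiftPairs A P ×ˢ A)).filter fun p =>
      (p.1.1.2, p.1.1.1 + p.1.1.2 - p.1.2) = (p.2.1.2, p.2.1.1 + p.2.1.2 - p.2.2)).card : ℝ) ≤
      thirdMoment A := by
  have hmap : ∀ p ∈ ((shiftPairs A P ×ˢ A) ×ˢ (shiftPairs A P ×ˢ A)).filter (fun p =>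
      (p.1.1.2, p.1.1.1 + p.1.1.2 - p.1.2) = (p.2.1.2, p.2.1.1 + p.2.1.2 - p.2.2)),
      p.2.1.1 - p.1.1.1 ∈ A - A := by
    intro p hp
    simp only [Finset.mem_filter, Finset.mem_product, mem_shiftPairs] at hp
    exact Finset.sub_mem_sub hp.1.2.1.1.1 hp.1.1.1.1.1
  rw [Finset.card_eq_sum_card_fiberwise hmap, thirdMoment]
  push_cast
  refine Finset.sum_le_sum fun δ _ => ?_
  have e : (diffRep A A δ : ℝ) ^ 3 = (((A.filter fun b => δ + b ∈ A) ×ˢ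
      ((A.filter fun b => δ + b ∈ A) ×ˢ (A.filter fun b => δ + b ∈ A))).card : ℝ) := by
    rw [Finset.card_product, Finset.card_product, diffRep]
    push_cast
    ring
  rw [e, Nat.cast_le]
  refine Finset.card_le_card_of_injOn (fun p => (p.1.1.1 + p.1.1.2, p.1.1.1, p.1.2)) ?_ ?_
  · rintro ⟨⟨⟨b, x⟩, c⟩, ⟨⟨b', x'⟩, c'⟩⟩ hp
    simp only [Finset.coe_filter, Set.mem_ofPred_eq, Finset.mem_filter, Finset.mem_product,
      mem_shiftPairs, Prod.mk.injEq] at hp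
    obtain ⟨⟨⟨⟨⟨⟨h1, h2⟩, h3⟩, h4⟩, ⟨⟨h5, h6⟩, h7⟩, h8⟩, rfl, h9⟩, rfl⟩ := hp
    simp only [Finset.coe_product, Finset.coe_filter, Set.mem_prod, Set.mem_ofPred_eq]
    refine ⟨⟨h3, ?_⟩, ⟨h1, ?_⟩, h4, ?_⟩
    · convert h7 using 1; ring
    · convert h5 using 1; ring
    · convert h8 using 1; linear_combination -h9
  · rintro ⟨⟨⟨b, x⟩, c⟩, ⟨⟨b', x'⟩, c'⟩⟩ hp ⟨⟨⟨e, y⟩, f⟩, ⟨⟨e', y'⟩, f'⟩⟩ hq h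
    simp only [Finset.coe_filter, Set.mem_ofPred_eq, Finset.mem_filter, Prod.mk.injEq] at hp hq
    simp only [Prod.mk.injEq] at h ⊢
    obtain ⟨⟨_, rfl, hp3⟩, hp4⟩ := hp
    obtain ⟨⟨_, rfl, hq3⟩, hq4⟩ := hq
    obtain ⟨h1, rfl, rfl⟩ := h
    have hx : x = y := by linear_combination h1
    have hb : b' = e' := by linear_combination hp4 - hq4
    refine ⟨⟨⟨rfl, hx⟩, rfl⟩, ⟨⟨hb, hx⟩, ?_⟩⟩
    linear_combination hp3 - hq3 + hb

/-- A popular difference `x = a - b` turns each `y ∈ D` with `x - y ∈ D` into many solutions of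
`a - y = b - z` with `y, z ∈ D`; here `D = A - A`. -/
lemma popular_pairs_le_energy (A P : Finset ℂ) (τ : ℝ)
    (hP : ∀ x ∈ P, τ ≤ (diffRep A A x : ℝ)) :
    τ * (((P ×ˢ (A - A)).filter fun q => q.1 - q.2 ∈ A - A).card : ℝ) ≤ energy A (A - A) := by
  set T := (P ×ˢ (A - A)).filter fun q => q.1 - q.2 ∈ A - A with hT
  have hsymm : ∀ x ∈ A - A, -x ∈ A - A := by
    intro x hx
    obtain ⟨a, ha, b, hb, rfl⟩ := Finset.mem_sub.1 hx
    rw [neg_sub]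
    exact Finset.sub_mem_sub hb ha
  have h1 : τ * (T.card : ℝ) ≤ (((T ×ˢ A).filter fun t => t.1.1 + t.2 ∈ A).card : ℝ) := by
    have e : (((T ×ˢ A).filter fun t => t.1.1 + t.2 ∈ A).card : ℝ) =
        ∑ q ∈ T, (diffRep A A q.1 : ℝ) := by
      simp only [diffRep, Finset.card_filter, Finset.sum_product]
      push_cast
      rfl
    rw [e, mul_comm, ← nsmul_eq_mul]
    refine Finset.card_nsmul_le_sum _ _ _ fun q hq => hP _ ?_
    exact (Finset.mem_product.1 (Finset.mem_filter.1 hq).1).1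
  refine h1.trans ?_
  have hmap : ∀ t ∈ (T ×ˢ A).filter (fun t => t.1.1 + t.2 ∈ A),
      t.1.1 + t.2 - t.1.2 ∈ A - (A - A) := by
    intro t ht
    simp only [hT, Finset.mem_filter, Finset.mem_product] at ht
    exact Finset.sub_mem_sub ht.2 ht.1.1.1.2
  rw [Finset.card_eq_sum_card_fiberwise hmap, energy]
  push_cast
  refine Finset.sum_le_sum fun w _ => ?_
  rw [diffRep, sq, ← Nat.cast_mul, ← Finset.card_product, Nat.cast_le]
  refine Finset.card_le_card_of_injOn (fun t => (t.1.2, t.1.2 - t.1.1)) ?_ ?_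
  · rintro ⟨⟨x, y⟩, b⟩ ht
    simp only [hT, Finset.coe_filter, Set.mem_ofPred_eq, Finset.mem_filter,
      Finset.mem_product] at ht
    obtain ⟨⟨⟨⟨⟨h1, h2⟩, h3⟩, h4⟩, h5⟩, rfl⟩ := ht
    simp only [Finset.coe_product, Finset.coe_filter, Set.mem_prod, Set.mem_ofPred_eq]
    refine ⟨⟨h2, ?_⟩, ?_, ?_⟩
    · convert h5 using 1; ring
    · have := hsymm _ h3
      rwa [neg_sub] at this
    · convert h4 using 1; ring
  · rintro ⟨⟨x, y⟩, b⟩ ht ⟨⟨x', y'⟩, b'⟩ ht' h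
    simp only [Finset.coe_filter, Set.mem_ofPred_eq, Finset.mem_filter] at ht ht'
    simp only [Prod.mk.injEq] at h ⊢
    obtain ⟨rfl, h⟩ := h
    have hx : x = x' := by linear_combination -h
    refine ⟨⟨hx, rfl⟩, ?_⟩
    linear_combination ht.2 - ht'.2 - hx

/-- Cauchy–Schwarz for the map `(a, b, c) ↦ (a - b, a - c)` on triples with `a - b` popular. -/
lemma triple_count (A P : Finset ℂ) (τ : ℝ) (hτ : 0 ≤ τ)
    (hP : ∀ x ∈ P, τ ≤ (diffRep A A x : ℝ)) :
    τ * ((A.card : ℝ) * ∑ x ∈ P, (diffRep A A x : ℝ)) ^ 2 ≤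
      thirdMoment A * energy A (A - A) := by
  have h1 := card_sq_le_collisions (shiftPairs A P ×ˢ A)
    ((P ×ˢ (A - A)).filter fun q => q.1 - q.2 ∈ A - A)
    (fun t => (t.1.2, t.1.1 + t.1.2 - t.2)) (by
      rintro ⟨⟨b, x⟩, c⟩ ht
      rw [Finset.mem_product, mem_shiftPairs] at ht
      simp only at ht
      simp only [Finset.mem_filter, Finset.mem_product]
      refine ⟨⟨ht.1.1.2, Finset.sub_mem_sub ht.1.2 ht.2⟩, ?_⟩
      convert Finset.sub_mem_sub ht.2 ht.1.1.1 using 1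
      ring)
  have h2 := collisions_le_thirdMoment A P
  have h3 := popular_pairs_le_energy A P τ hP
  rw [Finset.card_product, card_shiftPairs] at h1
  push_cast at h1
  have h30 : 0 ≤ thirdMoment A := Finset.sum_nonneg fun _ _ => by positivity
  calc τ * ((A.card : ℝ) * ∑ x ∈ P, (diffRep A A x : ℝ)) ^ 2
      = τ * ((∑ x ∈ P, (diffRep A A x : ℝ)) * (A.card : ℝ)) ^ 2 := by ring
    _ ≤ τ * ((((P ×ˢ (A - A)).filter fun q => q.1 - q.2 ∈ A - A).card : ℝ) * thirdMoment A) := by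
        refine mul_le_mul_of_nonneg_left (h1.trans ?_) hτ
        -- the two counts differ only in their decidability instances
        refine mul_le_mul_of_nonneg_left (le_trans (le_of_eq ?_) h2) (Nat.cast_nonneg _)
        congr!
    _ = τ * (((P ×ˢ (A - A)).filter fun q => q.1 - q.2 ∈ A - A).card : ℝ) * thirdMoment A := by
        ring
    _ ≤ energy A (A - A) * thirdMoment A := mul_le_mul_of_nonneg_right h3 h30
    _ = _ := mul_comm _ _

lemma card_pow_eight_le (A : Finset ℂ) (hA : A.Nonempty) :
    (A.card : ℝ) ^ 8 ≤ 8 * (A - A).card * (thirdMoment A * energy A (A - A)) := by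
  have hn : (0 : ℝ) < A.card := by exact_mod_cast hA.card_pos
  have hd : (0 : ℝ) < (A - A).card := by exact_mod_cast (hA.sub hA).card_pos
  set τ : ℝ := (A.card : ℝ) ^ 2 / (2 * (A - A).card) with hτ
  have hτ0 : 0 ≤ τ := by positivity
  set P := (A - A).filter fun d => τ ≤ (diffRep A A d : ℝ) with hP
  have h := triple_count A P τ hτ0 fun x hx => (Finset.mem_filter.1 hx).2
  have hsplit := Finset.sum_filter_add_sum_filter_not (A - A)
    (fun d => τ ≤ (diffRep A A d : ℝ)) fun d => (diffRep A A d : ℝ)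
  rw [sum_diffRep] at hsplit
  have hsmall : ∑ d ∈ (A - A).filter (fun d => ¬ τ ≤ (diffRep A A d : ℝ)),
      (diffRep A A d : ℝ) ≤ (A.card : ℝ) ^ 2 / 2 := by
    calc _ ≤ (((A - A).filter (fun d => ¬ τ ≤ (diffRep A A d : ℝ))).card : ℝ) * τ := by
          rw [← nsmul_eq_mul]
          exact Finset.sum_le_card_nsmul _ _ _ fun d hd =>
            (not_le.1 (Finset.mem_filter.1 hd).2).le
      _ ≤ ((A - A).card : ℝ) * τ := by
          gcongr
          exact Finset.filter_subset _ _
      _ = _ := by rw [hτ]; field_simp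
  have hmass : (A.card : ℝ) ^ 2 / 2 ≤ ∑ x ∈ P, (diffRep A A x : ℝ) := by
    rw [hP]; nlinarith
  have h2 : τ * ((A.card : ℝ) * ((A.card : ℝ) ^ 2 / 2)) ^ 2 ≤
      thirdMoment A * energy A (A - A) := by
    refine le_trans ?_ h
    gcongr
  have e : τ * ((A.card : ℝ) * ((A.card : ℝ) ^ 2 / 2)) ^ 2 =
      (A.card : ℝ) ^ 8 / (8 * (A - A).card) := by
    rw [hτ]; field_simp; ring
  rw [e, div_le_iff₀ (by positivity)] at h2
  linarith

lemma level_sq_le (A : Finset ℂ) (hA : A.Nonempty) (j : ℕ) :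
    (((A - A).filter fun d => j ≤ diffRep A A d).card : ℝ) ^ 2 * (j : ℝ) ^ 3 ≤
      thirdMoment A * energy A (A - A) / (A.card : ℝ) ^ 2 := by
  have hn : (0 : ℝ) < A.card := by exact_mod_cast hA.card_pos
  have h := triple_count A ((A - A).filter fun d => j ≤ diffRep A A d) j (Nat.cast_nonneg _)
    fun x hx => by exact_mod_cast (Finset.mem_filter.1 hx).2
  have hm : (((A - A).filter fun d => j ≤ diffRep A A d).card : ℝ) * j ≤
      ∑ x ∈ (A - A).filter (fun d => j ≤ diffRep A A d), (diffRep A A x : ℝ) := by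
    rw [← nsmul_eq_mul]
    exact Finset.card_nsmul_le_sum _ _ _ fun x hx => by
      exact_mod_cast (Finset.mem_filter.1 hx).2
  rw [le_div_iff₀ (by positivity)]
  refine le_trans ?_ h
  calc _ = (j : ℝ) * ((A.card : ℝ) *
        ((((A - A).filter fun d => j ≤ diffRep A A d).card : ℝ) * j)) ^ 2 := by ring
    _ ≤ _ := by gcongr

/-- A third moment bound from two decay rates of the level sets: `j ^ (-3/2)` below the threshold
`J = 12 β / ∑ f³` and `j ^ (-4)` above it. -/
lemma third_moment_le {ι : Type*} (s : Finset ι) (f : ι → ℕ) (α β : ℝ) (hα : 0 ≤ α)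
    (hβ : 0 < β)
    (h1 : ∀ j : ℕ, ((s.filter fun i => j ≤ f i).card : ℝ) ^ 2 * (j : ℝ) ^ 3 ≤ α)
    (h2 : ∀ j : ℕ, ((s.filter fun i => j ≤ f i).card : ℝ) * (j : ℝ) ^ 4 ≤ β) :
    (∑ i ∈ s, (f i : ℝ) ^ 3) ^ 5 ≤ 62208 * α * β ^ 3 := by
  have hE0 : 0 ≤ ∑ i ∈ s, (f i : ℝ) ^ 3 := Finset.sum_nonneg fun _ _ => by positivity
  rcases hE0.eq_or_lt with h0 | hpos
  · rw [← h0]; simp; positivity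
  obtain ⟨N, hN⟩ : ∃ N, ∀ i ∈ s, f i ≤ N := ⟨s.sup f, fun i hi => Finset.le_sup hi⟩
  have hlev := sum_cube_le_level s f N hN
  set E := ∑ i ∈ s, (f i : ℝ) ^ 3 with hE
  set J := 12 * β / E with hJ
  have hJ0 : 0 < J := by positivity
  rw [← Finset.sum_filter_add_sum_filter_not _ (fun j : ℕ => J < j)] at hlev
  have hhigh : ∑ j ∈ (Finset.Icc 1 N).filter (fun j : ℕ => J < j),
      3 * (j : ℝ) ^ 2 * ((s.filter fun i => j ≤ f i).card : ℝ) ≤ E / 2 := by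
    calc _ ≤ ∑ j ∈ (Finset.Icc 1 N).filter (fun j : ℕ => J < j), 3 * β * ((j : ℝ) ^ 2)⁻¹ := by
          refine Finset.sum_le_sum fun j hj => ?_
          have hj0 : (0 : ℝ) < j := hJ0.trans (Finset.mem_filter.1 hj).2
          rw [← div_eq_mul_inv, le_div_iff₀ (by positivity)]
          have := h2 j
          linarith
      _ = 3 * β * ∑ j ∈ (Finset.Icc 1 N).filter (fun j : ℕ => J < j), ((j : ℝ) ^ 2)⁻¹ := by
          rw [Finset.mul_sum]
      _ ≤ 3 * β * (2 / J) := by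
          have := tail_inv_sq_le N J hJ0
          gcongr
      _ = E / 2 := by rw [hJ]; field_simp; norm_num
  have hlow : (∑ j ∈ (Finset.Icc 1 N).filter (fun j : ℕ => ¬ J < j),
      3 * (j : ℝ) ^ 2 * ((s.filter fun i => j ≤ f i).card : ℝ)) ^ 2 ≤ 9 * α * J ^ 3 := by
    have hcount : (((Finset.Icc 1 N).filter (fun j : ℕ => ¬ J < j)).card : ℝ) ≤ J := by
      have hsub : (Finset.Icc 1 N).filter (fun j : ℕ => ¬ J < j) ⊆ Finset.Icc 1 ⌊J⌋₊ := by
        intro j hj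
        rw [Finset.mem_filter, Finset.mem_Icc] at hj
        exact Finset.mem_Icc.2 ⟨hj.1.1, Nat.le_floor (not_lt.1 hj.2)⟩
      have := Finset.card_le_card hsub
      rw [Nat.card_Icc, Nat.add_sub_cancel] at this
      exact (Nat.cast_le.2 this).trans (Nat.floor_le hJ0.le)
    calc _ ≤ (((Finset.Icc 1 N).filter (fun j : ℕ => ¬ J < j)).card : ℝ) *
          ∑ j ∈ (Finset.Icc 1 N).filter (fun j : ℕ => ¬ J < j),
            (3 * (j : ℝ) ^ 2 * ((s.filter fun i => j ≤ f i).card : ℝ)) ^ 2 :=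
          sq_sum_le_card_mul_sum_sq
      _ ≤ (((Finset.Icc 1 N).filter (fun j : ℕ => ¬ J < j)).card : ℝ) *
          ((((Finset.Icc 1 N).filter (fun j : ℕ => ¬ J < j)).card : ℝ) * (9 * α * J)) := by
          gcongr
          rw [← nsmul_eq_mul]
          refine Finset.sum_le_card_nsmul _ _ _ fun j hj => ?_
          have hjJ : (j : ℝ) ≤ J := not_lt.1 (Finset.mem_filter.1 hj).2
          calc _ = 9 * (((s.filter fun i => j ≤ f i).card : ℝ) ^ 2 * (j : ℝ) ^ 3) * j := by ring
            _ ≤ 9 * α * J := by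
              have := h1 j
              gcongr
      _ ≤ J * (J * (9 * α * J)) := by gcongr
      _ = _ := by ring
  have hhalf : E / 2 ≤ ∑ j ∈ (Finset.Icc 1 N).filter (fun j : ℕ => ¬ J < j),
      3 * (j : ℝ) ^ 2 * ((s.filter fun i => j ≤ f i).card : ℝ) := by linarith
  have hfin : (E / 2) ^ 2 ≤ 9 * α * J ^ 3 := le_trans (by gcongr) hlow
  have e : 9 * α * J ^ 3 = 15552 * α * β ^ 3 / E ^ 3 := by rw [hJ]; field_simp; ring
  rw [e, le_div_iff₀ (by positivity)] at hfin
  linarith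

/-! ### Combination of the estimates -/

/-- The bound with the fractional exponents cleared. -/
lemma exists_pow_bound : ∃ C : ℝ, 0 < C ∧ ∀ A : Finset ℂ, (0 : ℂ) ∉ A → 2 ≤ A.card →
    (A.card : ℝ) ^ 50 ≤
      C * (((A - A).card : ℝ) + ((A * A).card : ℝ)) ^ 39 * Real.log (A.card : ℝ) ^ 15 := by
  refine ⟨(8 ^ 4 * 62208 * 2000000 ^ 3) ^ 2 * 2654208 ^ 5 * 2 ^ 9, by positivity, ?_⟩
  intro A h0 hA2
  have hA : A.Nonempty := Finset.card_pos.1 (by omega)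
  have hn : (0 : ℝ) < A.card := by exact_mod_cast hA.card_pos
  have hd : (0 : ℝ) < (A - A).card := by exact_mod_cast (hA.sub hA).card_pos
  have hQ : (0 : ℝ) < (A * A).card := by
    exact_mod_cast hA.card_pos.trans_le (card_le_card_mul_self A h0 hA)
  have hlog : 1 / 2 ≤ Real.log A.card := by
    have h2 : Real.log 2 ≤ Real.log A.card :=
      Real.log_le_log (by norm_num) (by exact_mod_cast hA2)
    have := Real.log_two_gt_d9
    linarith
  have hcardD : A.card ≤ (A - A).card := by
    obtain ⟨c, hc⟩ := hA
    exact Finset.card_le_card_of_injOn (fun a => a - c)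
      (fun a ha => Finset.sub_mem_sub ha hc) (fun _ _ _ _ h => sub_left_injective h)
  have hE := energy_sq_le A (A - A) h0 hA hcardD
  have h8 := card_pow_eight_le A hA
  have hE0 : 0 ≤ energy A (A - A) := Finset.sum_nonneg fun _ _ => by positivity
  have hT0 : 0 ≤ thirdMoment A := Finset.sum_nonneg fun _ _ => by positivity
  have hlogpos : 0 < Real.log A.card := by linarith
  have hT := third_moment_le (A - A) (diffRep A A)
    (thirdMoment A * energy A (A - A) / (A.card : ℝ) ^ 2)
    (2000000 * (A * A).card * (A.card : ℝ) ^ 3 * Real.log A.card)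
    (by positivity) (by positivity) (level_sq_le A hA)
    (fun j => popular_diff_le A _ h0 hA2 j fun d hd => (Finset.mem_filter.1 hd).2)
  change thirdMoment A ^ 5 ≤ _ at hT
  generalize energy A (A - A) = E at *
  generalize thirdMoment A = T at *
  generalize ((A * A).card : ℝ) = Q at *
  generalize ((A - A).card : ℝ) = d at *
  generalize Real.log (A.card : ℝ) = L at *
  generalize (A.card : ℝ) = n at *
  have hTE : 0 < T * E := by
    have h : 0 < 8 * d * (T * E) := (by positivity : 0 < n ^ 8).trans_le h8
    exact pos_of_mul_pos_right h (by positivity)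
  have hTpos : 0 < T := pos_of_mul_pos_left hTE hE0
  have hT4 : T ^ 4 * n ^ 2 ≤ 62208 * E * (2000000 * Q * n ^ 3 * L) ^ 3 := by
    refine le_of_mul_le_mul_left ?_ hTpos
    calc T * (T ^ 4 * n ^ 2) = T ^ 5 * n ^ 2 := by ring
      _ ≤ 62208 * (T * E / n ^ 2) * (2000000 * Q * n ^ 3 * L) ^ 3 * n ^ 2 := by gcongr
      _ = T * (62208 * E * (2000000 * Q * n ^ 3 * L) ^ 3) := by field_simp
  have h25 : n ^ 25 ≤ (8 ^ 4 * 62208 * 2000000 ^ 3) * (d ^ 4 * E ^ 5 * Q ^ 3 * L ^ 3) := by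
    refine le_of_mul_le_mul_left ?_ (by positivity : 0 < n ^ 9)
    calc n ^ 9 * n ^ 25 = (n ^ 8) ^ 4 * n ^ 2 := by ring
      _ ≤ (8 * d * (T * E)) ^ 4 * n ^ 2 := by gcongr
      _ = 8 ^ 4 * d ^ 4 * E ^ 4 * (T ^ 4 * n ^ 2) := by ring
      _ ≤ 8 ^ 4 * d ^ 4 * E ^ 4 * (62208 * E * (2000000 * Q * n ^ 3 * L) ^ 3) := by gcongr
      _ = _ := by ring
  have hL : 1 ≤ (2 * L) ^ 9 := one_le_pow₀ (by linarith)
  generalize (8 ^ 4 * 62208 * 2000000 ^ 3 : ℝ) = C1 at *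
  calc n ^ 50 = (n ^ 25) ^ 2 := by ring
    _ ≤ (C1 * (d ^ 4 * E ^ 5 * Q ^ 3 * L ^ 3)) ^ 2 := by gcongr
    _ = C1 ^ 2 * d ^ 8 * (E ^ 2) ^ 5 * Q ^ 6 * L ^ 6 * 1 := by ring
    _ ≤ C1 ^ 2 * d ^ 8 * (2654208 * Q ^ 2 * d ^ 3) ^ 5 * Q ^ 6 * L ^ 6 * (2 * L) ^ 9 := by gcongr
    _ = C1 ^ 2 * 2654208 ^ 5 * 2 ^ 9 * (d ^ 23 * Q ^ 16) * L ^ 15 := by ring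
    _ ≤ C1 ^ 2 * 2654208 ^ 5 * 2 ^ 9 * ((d + Q) ^ 23 * (d + Q) ^ 16) * L ^ 15 := by
        gcongr <;> linarith
    _ = _ := by ring

theorem diff_product_bound :
    ∃ c : ℝ, 0 < c ∧ ∀ A : Finset ℂ, (0 : ℂ) ∉ A → 2 ≤ A.card →
      c * (A.card : ℝ) ^ ((50 : ℝ) / 39) / (Real.log (A.card : ℝ)) ^ ((5 : ℝ) / 13) ≤
        ((A - A).card : ℝ) + ((A * A).card : ℝ) := by
  obtain ⟨C, hC, h⟩ := exists_pow_bound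
  refine ⟨C ^ (-(1 : ℝ) / 39), by positivity, fun A h0 hA => ?_⟩
  have hA' := h A h0 hA
  have hn : (0 : ℝ) ≤ A.card := Nat.cast_nonneg _
  have hL : 0 < Real.log A.card := Real.log_pos (by exact_mod_cast hA)
  have hS : (0 : ℝ) ≤ ((A - A).card : ℝ) + ((A * A).card : ℝ) := by positivity
  refine le_of_pow_le_pow_left₀ (n := 39) (by norm_num) hS ?_
  have e1 : (C ^ (-(1 : ℝ) / 39)) ^ 39 = C⁻¹ := by
    rw [← Real.rpow_natCast, ← Real.rpow_mul hC.le]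
    norm_num [Real.rpow_neg_one]
  have e2 : ((A.card : ℝ) ^ ((50 : ℝ) / 39)) ^ 39 = (A.card : ℝ) ^ 50 := by
    rw [← Real.rpow_natCast, ← Real.rpow_mul hn, ← Real.rpow_natCast _ 50]
    norm_num
  have e3 : (Real.log (A.card : ℝ) ^ ((5 : ℝ) / 13)) ^ 39 = Real.log (A.card : ℝ) ^ 15 := by
    rw [← Real.rpow_natCast, ← Real.rpow_mul hL.le, ← Real.rpow_natCast _ 15]
    norm_num
  rw [div_pow, mul_pow, e1, e2, e3, div_le_iff₀ (by positivity), inv_mul_le_iff₀ hC]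
  linarith
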